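/- Let α ∈ Ξ be a dyadic rational, i.e. 2^k·α ∈ ℤ for some integer k ≥ 1. Then α ∈ C_α and α is an isolated point of C_α: there exists δ > 0 such that the open interval (α, α + δ) is disjoint from C_α. (Note that C_α ⊆ [α, 1], so no points of C_α lie below α.) -/

import Mathlib

/-- The set `Ξ` of Head's angles: angles `θ ∈ (0, 1/2]` with `2^k θ ∈ [θ, 1] (mod ℤ)`
for all `k ≥ 0`. -/
def HeadXi : Set ℝ :=
  {θ : ℝ | 0 < θ ∧ θ ≤ 1/2 ∧ ∀ k : ℕ, ∃ n : ℤ, θ ≤ 2 ^ k * θ - n ∧ 2 ^ k * θ - n ≤ 1}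

/-- `C_α`: the set of `t ∈ (0, 1]` with `2^k t ∈ [α, 1] (mod ℤ)` for all `k ≥ 0`. -/
def CSet (α : ℝ) : Set ℝ :=
  {t : ℝ | 0 < t ∧ t ≤ 1 ∧ ∀ k : ℕ, ∃ n : ℤ, α ≤ 2 ^ k * t - n ∧ 2 ^ k * t - n ≤ 1}

/-! If `2 ^ k * t` is an integer `n`, then points `s` slightly to the right of `t` have `2 ^ k * s`
slightly above `n`, so the `k`-th iterate of `s` under doubling falls in the gap `(0, α)` modulo `ℤ`
that orbits of points of `C_α` must avoid. -/

theorem not_exists_int_sub_mem_Icc {R : Type*} [Ring R] [LinearOrder R] [IsStrictOrderedRing R]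
    {a x : R} {n : ℤ} (hx : x ∈ Set.Ioo (n : R) (n + a)) :
    ¬ ∃ m : ℤ, a ≤ x - m ∧ x - m ≤ 1 := by
  rintro ⟨m, ha, h_one⟩
  have m_lt_n : m < n := by
    have : (m : R) < n := lt_of_add_lt_add_right ((le_sub_iff_add_le'.mp ha).trans_lt hx.2)
    exact_mod_cast this
  have x_le_n : x ≤ n :=
    calc x ≤ m + 1 := sub_le_iff_le_add'.mp h_one
      _ ≤ n := by exact_mod_cast Int.add_one_le_of_lt m_lt_n
  exact x_le_n.not_gt hx.1

theorem Ioo_inter_CSet_eq_empty {α t : ℝ} {k : ℕ} {n : ℤ} (hn : 2 ^ k * t = n) :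
    Set.Ioo t (t + α / 2 ^ k) ∩ CSet α = ∅ := by
  rw [Set.eq_empty_iff_forall_notMem]
  rintro s ⟨⟨t_lt_s, s_lt⟩, -, -, orbit⟩
  have two_pow_pos : (0 : ℝ) < 2 ^ k := by positivity
  have lower : (n : ℝ) < 2 ^ k * s := hn ▸ mul_lt_mul_of_pos_left t_lt_s two_pow_pos
  have upper : 2 ^ k * s < n + α :=
    calc 2 ^ k * s < 2 ^ k * (t + α / 2 ^ k) := mul_lt_mul_of_pos_left s_lt two_pow_pos
      _ = n + α := by rw [mul_add, hn, mul_div_cancel₀ α two_pow_pos.ne']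
  exact not_exists_int_sub_mem_Icc ⟨lower, upper⟩ (orbit k)

theorem dyadic_isolated_in_CSet_general {α t : ℝ} (hα : 0 < α)
    (ht : ∃ k : ℕ, ∃ n : ℤ, 2 ^ k * t = n) :
    ∃ δ > 0, Set.Ioo t (t + δ) ∩ CSet α = ∅ := by
  obtain ⟨k, n, hn⟩ := ht
  exact ⟨α / 2 ^ k, by positivity, Ioo_inter_CSet_eq_empty hn⟩

theorem mem_CSet_self_of_mem_HeadXi {α : ℝ} (hα : α ∈ HeadXi) : α ∈ CSet α := by
  obtain ⟨α_pos, α_le_half, orbit⟩ := hα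
  exact ⟨α_pos, α_le_half.trans (by norm_num), orbit⟩

/-- If `α ∈ Ξ` is dyadic then `α ∈ C_α` and `α` is an isolated point of `C_α`:
some interval `(α, α + δ)` is disjoint from `C_α`. -/
theorem dyadic_isolated_in_CSet (α : ℝ) (hα : α ∈ HeadXi)
    (hdya : ∃ k : ℕ, 1 ≤ k ∧ ∃ n : ℤ, 2 ^ k * α = n) :
    α ∈ CSet α ∧ ∃ δ > 0, Set.Ioo α (α + δ) ∩ CSet α = ∅ := by
  exact ⟨mem_CSet_self_of_mem_HeadXi hα,
    dyadic_isolated_in_CSet_general hα.1 (hdya.imp fun _ h => h.2)⟩
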